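/- Let $k$ be a field of characteristic not equal to $2$, let $V$ be a finite-dimensional $k$-vector space, and let $c : V \to V$ be a linear involution ($c^2 = \mathrm{id}$) that is neither $\mathrm{id}$ nor $-\mathrm{id}$. Then the ratio $\dim (\mathrm{Sym}^n V)^{c=1} / \dim \mathrm{Sym}^n V$ of the dimension of the $+1$-eigenspace of the induced involution on the $n$-th symmetric power to the dimension of the $n$-th symmetric power tends to $1/2$ as $n \to \infty$. -/

import Mathlib

open scoped TensorProduct

section SymPow

variable (k : Type*) [Field k] (V : Type*) [AddCommGroup V] [Module k V]

/-- The submodule of relations defining the `n`-th symmetric power as a quotient of the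
`n`-th tensor power. -/
noncomputable def symRel (n : ℕ) : Submodule k (⨂[k]^n V) :=
  Submodule.span k {x | ∃ (σ : Equiv.Perm (Fin n)) (v : Fin n → V),
    x = PiTensorProduct.tprod k v - PiTensorProduct.tprod k (v ∘ σ)}

/-- The `n`-th symmetric power `Symⁿ V`, as the quotient of the `n`-th tensor power by
the permutation relations. -/
noncomputable def SymPow (n : ℕ) : Type _ := (⨂[k]^n V) ⧸ symRel k V n

noncomputable instance (n : ℕ) : AddCommGroup (SymPow k V n) :=
  inferInstanceAs (AddCommGroup ((⨂[k]^n V) ⧸ symRel k V n))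

noncomputable instance (n : ℕ) : Module k (SymPow k V n) :=
  inferInstanceAs (Module k ((⨂[k]^n V) ⧸ symRel k V n))

theorem symRel_le_comap (n : ℕ) (c : V →ₗ[k] V) :
    symRel k V n ≤ Submodule.comap
      (PiTensorProduct.map (fun _ : Fin n => c)) (symRel k V n) := by
  rw [symRel, Submodule.span_le]
  rintro x ⟨σ, v, rfl⟩
  rw [SetLike.mem_coe, Submodule.mem_comap, map_sub, PiTensorProduct.map_tprod,
    PiTensorProduct.map_tprod]
  exact Submodule.subset_span ⟨σ, fun i => c (v i), rfl⟩

/-- The map functorially induced on the `n`-th symmetric power by a linear map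
`c : V →ₗ[k] V`. -/
noncomputable def symPowMap (n : ℕ) (c : V →ₗ[k] V) : SymPow k V n →ₗ[k] SymPow k V n :=
  Submodule.mapQ (symRel k V n) (symRel k V n)
    (PiTensorProduct.map (fun _ : Fin n => c)) (symRel_le_comap k V n c)

end SymPow

/-!
Diagonalise `c` in a basis `b` of `V` with signs `ε`, both of which occur. The monomials in `b` form
a basis of `Symⁿ V` on which the induced map acts by products of signs, so the dimension of its
fixed space exceeds half of `dim Symⁿ V` by half of `hₙ(ε)`, where `hₙ` is the complete homogeneous
symmetric polynomial. Splitting off the monomials divisible by a chosen variable `p` gives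
`hₙ₊₁(ε) = ε p * hₙ(ε) + r_p`; adding this for two variables of opposite sign cancels `hₙ(ε)`, and
both remainders are at most `dim Symⁿ⁺¹ V - dim Symⁿ V` in absolute value, which is `o(dim Symⁿ V)`.
-/

open Filter Module Topology

section SymOfFn

variable {α β : Type*}

theorem exists_perm_eq_comp_of_map_univ_eq {ι : Type*} [Fintype ι] {f g : ι → α}
    (h : Finset.univ.val.map f = Finset.univ.val.map g) : ∃ σ : Equiv.Perm ι, f = g ∘ σ := by
  classical
  have fiber_equiv (a : α) : Nonempty ({i // f i = a} ≃ {i // g i = a}) := by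
    rw [← Fintype.card_eq, Fintype.card_subtype, Fintype.card_subtype]
    have hcount := congrArg (Multiset.count a) h
    rw [Multiset.count_map, Multiset.count_map] at hcount
    simpa only [Finset.card_def, Finset.filter_val, eq_comm] using hcount
  refine ⟨Equiv.ofFiberEquiv fun a => (fiber_equiv a).some, ?_⟩
  exact funext fun i => (Equiv.ofFiberEquiv_map _ i).symm

/-- The unordered tuple underlying an `n`-tuple. -/
def symOfFn {n : ℕ} (f : Fin n → α) : Sym α n :=
  ⟨Finset.univ.val.map f, by simp⟩

theorem symOfFn_surjective (n : ℕ) : Function.Surjective (symOfFn : (Fin n → α) → Sym α n) := by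
  rintro ⟨⟨l⟩, rfl⟩
  exact ⟨l.get, Sym.ext ((Fin.univ_val_map l.get).trans (congrArg _ (List.ofFn_get l)))⟩

theorem exists_perm_of_symOfFn_eq {n : ℕ} {f g : Fin n → α} (h : symOfFn f = symOfFn g) :
    ∃ σ : Equiv.Perm (Fin n), f = g ∘ σ :=
  exists_perm_eq_comp_of_map_univ_eq (congrArg Subtype.val h)

theorem map_symOfFn {n : ℕ} (g : α → β) (f : Fin n → α) :
    (symOfFn f).map g = symOfFn (g ∘ f) :=
  Sym.ext (Multiset.map_map g f Finset.univ.val)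

theorem prod_map_symOfFn {M : Type*} [CommMonoid M] {n : ℕ} (x : α → M) (f : Fin n → α) :
    ((symOfFn f : Multiset α).map x).prod = ∏ i, x (f i) :=
  congrArg Multiset.prod (Multiset.map_map x f Finset.univ.val)

end SymOfFn

namespace SymPow

variable (k : Type*) [Field k] {V : Type*} [AddCommGroup V] [Module k V] {ι : Type*} {n : ℕ}

/-- The universal symmetric multilinear map `(v₁, …, vₙ) ↦ v₁ ⋯ vₙ` into `Symⁿ V`. -/
noncomputable def tprod (V : Type*) [AddCommGroup V] [Module k V] (n : ℕ) :
    MultilinearMap k (fun _ : Fin n => V) (SymPow k V n) :=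
  LinearMap.compMultilinearMap (M₂ := ⨂[k]^n V) (M₃ := SymPow k V n)
    (symRel k V n).mkQ (PiTensorProduct.tprod k)

theorem tprod_comp_perm (v : Fin n → V) (σ : Equiv.Perm (Fin n)) :
    tprod k V n (v ∘ σ) = tprod k V n v :=
  ((Submodule.Quotient.eq (symRel k V n)).2 (Submodule.subset_span ⟨σ, v, rfl⟩)).symm

/-- The product in `Symⁿ V` of an unordered `n`-tuple of vectors. Every unordered tuple comes from
an ordered one, so the default value of `Function.extend` is never used. -/
noncomputable def mk (s : Sym V n) : SymPow k V n :=
  Function.extend symOfFn (tprod k V n) 0 s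

theorem mk_symOfFn (v : Fin n → V) : mk k (symOfFn v) = tprod k V n v := by
  have factors : Function.FactorsThrough (tprod k V n) symOfFn := fun v w h => by
    obtain ⟨σ, rfl⟩ := exists_perm_of_symOfFn_eq h
    exact tprod_comp_perm k w σ
  exact factors.extend_apply 0 v

theorem mk_map_smul (a : ι → k) (v : ι → V) (s : Sym ι n) :
    mk k (s.map fun i => a i • v i) = ((s : Multiset ι).map a).prod • mk k (s.map v) := by
  obtain ⟨f, rfl⟩ := symOfFn_surjective n s
  rw [map_symOfFn, map_symOfFn, mk_symOfFn, mk_symOfFn, prod_map_symOfFn]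
  exact MultilinearMap.map_smul_univ _ _ _

variable {k}

theorem symPowMap_mk (c : V →ₗ[k] V) (s : Sym V n) :
    symPowMap k V n c (mk k s) = mk k (s.map c) := by
  obtain ⟨v, rfl⟩ := symOfFn_surjective n s
  rw [map_symOfFn, mk_symOfFn, mk_symOfFn]
  exact congrArg (symRel k V n).mkQ (PiTensorProduct.map_tprod _ _)

section Lift

variable {A : Type*} [CommRing A] [Algebra k A]

/-- The degree `n` part of the algebra map on the symmetric algebra induced by `φ : V →ₗ[k] A`:
it sends a product of vectors to the product of their images. -/
noncomputable def lift (φ : V →ₗ[k] A) (n : ℕ) : SymPow k V n →ₗ[k] A :=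
  (symRel k V n).liftQ
    (PiTensorProduct.lift ((MultilinearMap.mkPiAlgebra k (Fin n) A).compLinearMap fun _ => φ)) <| by
      rw [symRel, Submodule.span_le]
      rintro _ ⟨σ, v, rfl⟩
      simpa [sub_eq_zero] using (Equiv.prod_comp σ fun i => φ (v i)).symm

theorem lift_mk (φ : V →ₗ[k] A) (s : Sym V n) :
    lift φ n (mk k s) = ((s : Multiset V).map φ).prod := by
  obtain ⟨v, rfl⟩ := symOfFn_surjective n s
  rw [mk_symOfFn, prod_map_symOfFn]
  exact PiTensorProduct.lift.tprod v

end Lift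

end SymPow

section Monomials

theorem prod_map_X_eq_monomial_toFinsupp {R ι : Type*} [CommSemiring R] [DecidableEq ι]
    (s : Multiset ι) :
    (s.map MvPolynomial.X).prod = MvPolynomial.monomial s.toFinsupp (1 : R) := by
  induction s using Multiset.induction with
  | empty => simp
  | cons a s ih =>
    rw [Multiset.map_cons, Multiset.prod_cons, ih, ← Multiset.singleton_add, map_add,
      Multiset.toFinsupp_singleton, MvPolynomial.X, MvPolynomial.monomial_mul, one_mul]

theorem linearIndependent_prod_map_X (R ι : Type*) [CommSemiring R] (n : ℕ) :
    LinearIndependent R fun s : Sym ι n =>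
      ((s : Multiset ι).map (MvPolynomial.X (R := R))).prod := by
  classical
  simp only [prod_map_X_eq_monomial_toFinsupp]
  rw [← Function.comp_def (fun m => MvPolynomial.monomial m (1 : R))
    fun s : Sym ι n => Multiset.toFinsupp (s : Multiset ι), ← MvPolynomial.coe_basisMonomials]
  exact (MvPolynomial.basisMonomials ι R).linearIndependent.comp _
    (Multiset.toFinsupp.injective.comp Sym.coe_injective)

end Monomials

namespace SymPow

variable {k : Type*} [Field k] {V : Type*} [AddCommGroup V] [Module k V] {ι : Type*} {n : ℕ}

theorem linearIndependent_mk_map_basis (b : Basis ι k V) (n : ℕ) :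
    LinearIndependent k fun s : Sym ι n => mk k (s.map b) := by
  refine LinearIndependent.of_comp (lift (b.constr k (MvPolynomial.X (R := k))) n) ?_
  have lift_monomial : (lift (b.constr k (MvPolynomial.X (R := k))) n ∘ fun s => mk k (s.map b)) =
      fun s : Sym ι n => ((s : Multiset ι).map MvPolynomial.X).prod := by
    ext1 s
    rw [Function.comp_apply, lift_mk, Sym.coe_map, Multiset.map_map]
    simp only [Function.comp_def, Basis.constr_basis]
  rw [lift_monomial]
  exact linearIndependent_prod_map_X k ι n

theorem span_range_mk_map_basis (b : Basis ι k V) (n : ℕ) :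
    Submodule.span k (Set.range fun s : Sym ι n => mk k (s.map b)) = ⊤ := by
  let π : (⨂[k]^n V) →ₗ[k] SymPow k V n := (symRel k V n).mkQ
  have range_π : LinearMap.range π = ⊤ := Submodule.range_mkQ _
  rw [eq_top_iff, ← range_π, LinearMap.range_eq_map,
    ← (Basis.piTensorProduct fun _ : Fin n => b).span_eq, Submodule.map_span, Submodule.span_le]
  rintro _ ⟨_, ⟨f, rfl⟩, rfl⟩
  refine Submodule.subset_span ⟨symOfFn f, ?_⟩
  rw [Basis.piTensorProduct_apply]
  exact (congrArg (mk k) (map_symOfFn b f)).trans (mk_symOfFn k _)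

/-- The basis of `Symⁿ V` consisting of the monomials of degree `n` in a basis of `V`. -/
noncomputable def basis (b : Basis ι k V) (n : ℕ) : Basis (Sym ι n) k (SymPow k V n) :=
  Basis.mk (linearIndependent_mk_map_basis b n) (span_range_mk_map_basis b n).ge

theorem symPowMap_basis (b : Basis ι k V) {c : V →ₗ[k] V} {w : ι → k}
    (hc : ∀ i, c (b i) = w i • b i) (s : Sym ι n) :
    symPowMap k V n c (basis b n s) = ((s : Multiset ι).map w).prod • basis b n s := by
  rw [basis, Basis.mk_apply, symPowMap_mk, Sym.map_map, ← mk_map_smul]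
  simp only [Function.comp_def, hc]

end SymPow

section Eigenspace

variable {R M ι : Type*} [CommRing R] [AddCommGroup M] [Module R M]

theorem eigenspace_eq_span_of_basis [NoZeroDivisors R] (b : Basis ι R M) {f : End R M} {w : ι → R}
    (hf : ∀ i, f (b i) = w i • b i) (μ : R) :
    f.eigenspace μ = Submodule.span R (b '' {i | w i = μ}) := by
  have repr_apply (v : M) (i : ι) : b.repr (f v) i = w i * b.repr v i := by
    have : b.coord i ∘ₗ f = w i • b.coord i := b.ext fun j => by
      by_cases hij : j = i <;> simp [hf, hij]
    exact LinearMap.congr_fun this v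
  ext v
  rw [End.mem_eigenspace_iff, b.mem_span_image, b.ext_elem_iff]
  refine forall_congr' fun i => ?_
  rw [repr_apply, map_smul, Finsupp.smul_apply, smul_eq_mul, mul_eq_mul_right_iff, Finset.mem_coe,
    Finsupp.mem_support_iff, or_iff_not_imp_right, Set.mem_ofPred_eq]

theorem finrank_eigenspace_of_basis [IsDomain R] [DecidableEq R] [Fintype ι] (b : Basis ι R M)
    {f : End R M} {w : ι → R} (hf : ∀ i, f (b i) = w i • b i) (μ : R) :
    finrank R (f.eigenspace μ) = Fintype.card {i // w i = μ} := by
  rw [eigenspace_eq_span_of_basis b hf, Set.image_eq_range]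
  exact finrank_span_eq_card (b.linearIndependent.comp _ Subtype.val_injective)

theorem two_mul_finrank_eigenspace_one_of_sign_basis [IsDomain R] (htwo : (2 : R) ≠ 0)
    [Fintype ι] (b : Basis ι R M) {f : End R M} {ε : ι → ℤˣ}
    (hf : ∀ i, f (b i) = ((ε i : ℤ) : R) • b i) :
    2 * (finrank R (f.eigenspace 1) : ℤ) = Fintype.card ι + ∑ i, (ε i : ℤ) := by
  classical
  have neg_one_ne_one : (-1 : R) ≠ 1 := fun h => htwo <| by
    rw [← one_add_one_eq_two, ← neg_eq_iff_add_eq_zero, h]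
  rw [finrank_eigenspace_of_basis b hf, Fintype.card_subtype, Finset.card_filter, Nat.cast_sum,
    Finset.mul_sum, Fintype.card, Finset.cast_card, ← Finset.sum_add_distrib]
  refine Finset.sum_congr rfl fun i _ => ?_
  obtain h | h := Int.units_eq_one_or (ε i) <;> simp [h, neg_one_ne_one]

theorem isCompl_eigenspace_one_neg_one [Invertible (2 : R)] {c : End R M}
    (hc : Function.Involutive c) : IsCompl (c.eigenspace 1) (c.eigenspace (-1)) := by
  simp only [isCompl_iff, Submodule.disjoint_def, codisjoint_iff, Submodule.eq_top_iff',
    Submodule.mem_sup, End.mem_eigenspace_iff, one_smul, neg_smul]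
  refine ⟨fun v hpos hneg => ?_, fun v =>
    ⟨⅟(2 : R) • (v + c v), ?_, ⅟(2 : R) • (v - c v), ?_, ?_⟩⟩
  · have two_smul_v : (2 : R) • v = 0 := by
      rw [two_smul, add_eq_zero_iff_eq_neg, ← hneg, hpos]
    rw [← invOf_smul_smul (2 : R) v, two_smul_v, smul_zero]
  · rw [map_smul, map_add, hc v, add_comm]
  · rw [map_smul, map_sub, hc v, ← smul_neg, neg_sub]
  · rw [← smul_add, add_add_sub_cancel, ← two_smul R, invOf_smul_smul]

theorem exists_sign_ne_of_ne_id_of_ne_neg_id (b : Basis ι R M) {f : M →ₗ[R] M}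
    {ε : ι → ℤˣ} (hf : ∀ i, f (b i) = ((ε i : ℤ) : R) • b i)
    (hid : f ≠ LinearMap.id) (hneg : f ≠ -LinearMap.id) : ∃ p q, ε p ≠ ε q := by
  obtain ⟨p, hp⟩ : ∃ p, ε p ≠ 1 := by
    by_contra! h
    exact hid (b.ext fun i => by simp [hf, h])
  obtain ⟨q, hq⟩ : ∃ q, ε q ≠ -1 := by
    by_contra! h
    exact hneg (b.ext fun i => by simp [hf, h])
  refine ⟨p, q, ?_⟩
  rwa [Int.units_ne_iff_eq_neg.1 hp, ne_comm]

end Eigenspace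

theorem units_coe_prod_map {M ι : Type*} [CommMonoid M] (x : ι → Mˣ) (s : Multiset ι) :
    ((s.map x).prod : M) = (s.map fun i => (x i : M)).prod := by
  rw [← Units.coeHom_apply, map_multiset_prod, Multiset.map_map]
  rfl

section SignBasis

universe u

variable {k : Type*} [Field k] {V : Type u} [AddCommGroup V] [Module k V]

theorem exists_sign_basis_of_involutive (htwo : (2 : k) ≠ 0) {c : V →ₗ[k] V}
    (hc : Function.Involutive c) :
    ∃ (ι : Type u) (b : Basis ι k V) (ε : ι → ℤˣ), ∀ i, c (b i) = ((ε i : ℤ) : k) • b i := by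
  have := invertibleOfNonzero htwo
  let b₁ := Basis.ofVectorSpace k (End.eigenspace c 1)
  let b₂ := Basis.ofVectorSpace k (End.eigenspace c (-1))
  refine ⟨_, (b₁.prod b₂).map (Submodule.prodEquivOfIsCompl _ _
    (isCompl_eigenspace_one_neg_one hc)), Sum.elim 1 (-1), ?_⟩
  rintro (i | i)
  · simpa using End.mem_eigenspace_iff.1 (b₁ i).2
  · simpa using End.mem_eigenspace_iff.1 (b₂ i).2

theorem two_mul_finrank_ker_symPowMap_sub_id (htwo : (2 : k) ≠ 0) {ι : Type*} [Fintype ι]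
    [DecidableEq ι] (b : Basis ι k V) {c : V →ₗ[k] V} {ε : ι → ℤˣ}
    (hb : ∀ i, c (b i) = ((ε i : ℤ) : k) • b i) (n : ℕ) :
    2 * (finrank k (LinearMap.ker (symPowMap k V n c - LinearMap.id)) : ℤ) =
      Fintype.card (Sym ι n) + ∑ s : Sym ι n, (((s : Multiset ι).map ε).prod : ℤ) := by
  have hker : LinearMap.ker (symPowMap k V n c - LinearMap.id) =
      End.eigenspace (symPowMap k V n c) 1 := by
    rw [End.eigenspace_def, one_smul, End.one_eq_id]
  rw [hker]
  refine two_mul_finrank_eigenspace_one_of_sign_basis htwo (SymPow.basis b n) fun s => ?_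
  rw [SymPow.symPowMap_basis b hb, units_coe_prod_map, Int.cast_multiset_prod, Multiset.map_map]
  rfl

end SignBasis

section CompleteHomogeneous

variable {ι : Type*} [Fintype ι] [DecidableEq ι]

theorem sum_sym_succ_prod_map {R : Type*} [CommSemiring R] (x : ι → R) (p : ι) (n : ℕ) :
    ∑ s : Sym ι (n + 1), ((s : Multiset ι).map x).prod =
      x p * ∑ s : Sym ι n, ((s : Multiset ι).map x).prod +
        ∑ s : Sym ι (n + 1) with p ∉ s, ((s : Multiset ι).map x).prod := by
  rw [← Finset.sum_filter_add_sum_filter_not Finset.univ (p ∈ ·), Finset.mul_sum]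
  congr 1
  refine (Finset.sum_nbij (p ::ₛ ·) ?_ ?_ ?_ ?_).symm
  · simp
  · exact fun s _ t _ h => (Sym.cons_inj_right p s t).1 h
  · intro s hs
    obtain ⟨t, rfl⟩ := Sym.exists_cons_of_mem (Finset.mem_filter.1 hs).2
    exact ⟨t, by simp⟩
  · simp [Sym.coe_cons]

theorem card_sym_succ (p : ι) (n : ℕ) :
    Fintype.card (Sym ι (n + 1)) =
      Fintype.card (Sym ι n) + Finset.card {s : Sym ι (n + 1) | p ∉ s} := by
  simpa using sum_sym_succ_prod_map (fun _ => (1 : ℕ)) p n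

theorem abs_sum_sym_succ_sign_le {ε : ι → ℤˣ} {p q : ι} (hpq : ε p ≠ ε q) (n : ℕ) :
    |∑ s : Sym ι (n + 1), (((s : Multiset ι).map ε).prod : ℤ)| ≤
      Fintype.card (Sym ι (n + 1)) - Fintype.card (Sym ι n) := by
  let remainder (a : ι) : ℤ :=
    ∑ s : Sym ι (n + 1) with a ∉ s, (((s : Multiset ι).map ε).prod : ℤ)
  have abs_remainder_le (a : ι) :
      |remainder a| ≤ Fintype.card (Sym ι (n + 1)) - Fintype.card (Sym ι n) := by
    calc |remainder a| ≤ ∑ s : Sym ι (n + 1) with a ∉ s, |(((s : Multiset ι).map ε).prod : ℤ)| :=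
          Finset.abs_sum_le_sum_abs _ _
      _ = Finset.card {s : Sym ι (n + 1) | a ∉ s} := by simp [Int.abs_eq_natAbs]
      _ = _ := by rw [card_sym_succ a n]; push_cast; ring
  have recurrence (a : ι) : ∑ s : Sym ι (n + 1), (((s : Multiset ι).map ε).prod : ℤ) =
      ε a * ∑ s : Sym ι n, (((s : Multiset ι).map ε).prod : ℤ) + remainder a := by
    simpa only [remainder, units_coe_prod_map] using sum_sym_succ_prod_map (fun i => (ε i : ℤ)) a n
  have hp := recurrence p
  have hq := recurrence q
  rw [Int.units_ne_iff_eq_neg.1 hpq, Units.val_neg, neg_mul] at hp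
  have := abs_le.1 (abs_remainder_le p)
  have := abs_le.1 (abs_remainder_le q)
  exact abs_le.2 ⟨by linarith, by linarith⟩

end CompleteHomogeneous

section Asymptotics

theorem succ_mul_multichoose_succ (m n : ℕ) :
    (n + 1) * m.multichoose (n + 1) = (m + n) * m.multichoose n := by
  obtain _ | m := m
  · cases n <;> simp
  · have h := Nat.add_one_mul_choose_eq (m + n) n
    rw [Nat.multichoose_eq, Nat.multichoose_eq, show m + 1 + (n + 1) - 1 = m + n + 1 by omega,
      show m + 1 + n - 1 = m + n by omega, mul_comm, ← h, Nat.add_right_comm]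

theorem multichoose_pos {m : ℕ} (hm : 0 < m) (n : ℕ) : 0 < m.multichoose n := by
  rw [Nat.multichoose_eq]
  exact Nat.choose_pos (by omega)

theorem tendsto_multichoose_div_multichoose_succ {m : ℕ} (hm : 0 < m) :
    Tendsto (fun n : ℕ => (m.multichoose n : ℝ) / m.multichoose (n + 1)) atTop (𝓝 1) := by
  have ratio (n : ℕ) :
      (m.multichoose n : ℝ) / m.multichoose (n + 1) = (1 + 1 * n) / (m + 1 * n) := by
    have hpos : (0 : ℝ) < m.multichoose (n + 1) := mod_cast multichoose_pos hm _
    have h : ((n : ℝ) + 1) * m.multichoose (n + 1) = (m + n) * m.multichoose n :=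
      mod_cast succ_mul_multichoose_succ m n
    rw [div_eq_div_iff hpos.ne' (by positivity)]
    linarith
  simpa [ratio] using tendsto_add_mul_div_add_mul_atTop_nhds (1 : ℝ) m 1 one_ne_zero

theorem tendsto_sum_sym_sign_div_card {ι : Type*} [Fintype ι] [DecidableEq ι] {ε : ι → ℤˣ}
    {p q : ι} (hpq : ε p ≠ ε q) :
    Tendsto (fun n : ℕ => ((∑ s : Sym ι n, (((s : Multiset ι).map ε).prod : ℤ) : ℤ) : ℝ) /
      Fintype.card (Sym ι n)) atTop (𝓝 0) := by
  have card_pos : 0 < Fintype.card ι := Fintype.card_pos_iff.2 ⟨p⟩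
  have card_sym_pos (n : ℕ) : (0 : ℝ) < Fintype.card (Sym ι n) :=
    mod_cast Fintype.card_pos_iff.2 ⟨Sym.replicate n p⟩
  have card_ratio : Tendsto (fun n : ℕ =>
      1 - (Fintype.card (Sym ι n) : ℝ) / Fintype.card (Sym ι (n + 1))) atTop (𝓝 0) := by
    simpa [Sym.card_sym_eq_multichoose] using
      (tendsto_multichoose_div_multichoose_succ card_pos).const_sub 1
  rw [← tendsto_add_atTop_iff_nat 1]
  refine squeeze_zero_norm (fun n => ?_) card_ratio
  rw [norm_div, RCLike.norm_natCast, one_sub_div (card_sym_pos _).ne', Real.norm_eq_abs]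
  gcongr
  exact mod_cast abs_sum_sym_succ_sign_le hpq n

end Asymptotics

/-- for a linear involution `c ≠ ±id` of a finite-dimensional vector space
over a field of characteristic `≠ 2`, the ratio of the dimension of the `+1`-eigenspace
of the induced involution on `Symⁿ V` to `dim Symⁿ V` tends to `1/2`. -/
theorem stmt_0 (k : Type*) [Field k] (hchar : (2 : k) ≠ 0)
    (V : Type*) [AddCommGroup V] [Module k V] [FiniteDimensional k V]
    (c : V →ₗ[k] V) (hc : c ∘ₗ c = LinearMap.id)
    (h1 : c ≠ LinearMap.id) (h2 : c ≠ -LinearMap.id) :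
    Filter.Tendsto
      (fun n : ℕ =>
        (Module.finrank k (LinearMap.ker (symPowMap k V n c - LinearMap.id)) : ℝ) /
          (Module.finrank k (SymPow k V n) : ℝ))
      Filter.atTop (nhds (1 / 2)) := by
  classical
  obtain ⟨ι, b, ε, hb⟩ := exists_sign_basis_of_involutive hchar (LinearMap.congr_fun hc)
  obtain ⟨p, q, hpq⟩ := exists_sign_ne_of_ne_id_of_ne_neg_id b hb h1 h2
  have := Module.Finite.finite_basis b
  have := Fintype.ofFinite ι
  have card_sym_pos (n : ℕ) : (0 : ℝ) < Fintype.card (Sym ι n) :=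
    mod_cast Fintype.card_pos_iff.2 ⟨Sym.replicate n p⟩
  have ratio_eq (n : ℕ) :
      (finrank k (LinearMap.ker (symPowMap k V n c - LinearMap.id)) : ℝ) /
          finrank k (SymPow k V n) =
        1 / 2 + 1 / 2 * (((∑ s : Sym ι n, (((s : Multiset ι).map ε).prod : ℤ) : ℤ) : ℝ) /
          Fintype.card (Sym ι n)) := by
    have h := congrArg (Int.cast : ℤ → ℝ) (two_mul_finrank_ker_symPowMap_sub_id hchar b hb n)
    push_cast at h ⊢
    rw [finrank_eq_card_basis (SymPow.basis b n)]
    have := (card_sym_pos n).ne'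
    field_simp
    linarith
  simpa only [ratio_eq, mul_zero, add_zero] using
    ((tendsto_sum_sym_sign_div_card hpq).const_mul (1 / 2)).const_add (1 / 2)
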